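/- Carry-over of completeness: suppose r is a reduction from H to H'. Then: (i) if H' is complete then H is complete; (ii) for all CKA terms e, f, cl_H(⟦e⟧) = cl_H(⟦f⟧) if and only if cl_{H'}(⟦r(e)⟧) = cl_{H'}(⟦r(f)⟧). -/

import Mathlib

namespace CKAH

open Classical

/-! ### Labelled posets and pomsets -/

/-- A labelled poset over alphabet `A`: a finite carrier with a partial order and labelling. -/
structure LPoset (A : Type) : Type 1 where
  carrier : Type
  [fin : Fintype carrier]
  [ord : PartialOrder carrier]
  lab : carrier → A

attribute [instance] LPoset.fin LPoset.ord

/-- Isomorphism of labelled posets: an order isomorphism preserving labels. -/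
def LPoset.Iso {A : Type} (u v : LPoset A) : Prop :=
  ∃ e : u.carrier ≃o v.carrier, ∀ x, v.lab (e x) = u.lab x

theorem LPoset.iso_equivalence (A : Type) : Equivalence (LPoset.Iso (A := A)) where
  refl u := ⟨OrderIso.refl _, fun _ => rfl⟩
  symm := by
    rintro u v ⟨e, he⟩
    exact ⟨e.symm, fun x => by rw [← he (e.symm x), OrderIso.apply_symm_apply]⟩
  trans := by
    rintro u v w ⟨e, he⟩ ⟨f, hf⟩
    exact ⟨e.trans f, fun x => by rw [OrderIso.trans_apply, hf, he]⟩

instance pomSetoid (A : Type) : Setoid (LPoset A) := ⟨LPoset.Iso, LPoset.iso_equivalence A⟩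

/-- A pomset is an isomorphism class of labelled posets. -/
def Pomset (A : Type) : Type 1 := Quotient (pomSetoid A)

/-- Sequential composition of labelled posets: disjoint union, everything on the left
below everything on the right (lexicographic sum order). -/
def LPoset.seqL {A : Type} (u v : LPoset A) : LPoset A where
  carrier := u.carrier ⊕ₗ v.carrier
  fin := inferInstanceAs (Fintype (u.carrier ⊕ v.carrier))
  lab := fun x => Sum.elim u.lab v.lab (ofLex x)

/-- Parallel composition of labelled posets: disjoint union with no cross ordering. -/
def LPoset.parL {A : Type} (u v : LPoset A) : LPoset A where
  carrier := u.carrier ⊕ v.carrier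
  lab := Sum.elim u.lab v.lab

def Pomset.seq {A : Type} : Pomset A → Pomset A → Pomset A :=
  Quotient.map₂ LPoset.seqL (by
    rintro u₁ u₂ ⟨e, he⟩ v₁ v₂ ⟨f, hf⟩
    refine ⟨(RelIso.sumLexCongr e f :
      (u₁.carrier ⊕ₗ v₁.carrier) ≃o (u₂.carrier ⊕ₗ v₂.carrier)), ?_⟩
    rintro (x | x)
    · exact he x
    · exact hf x)

/-- Order isomorphism between disjoint-union orders, from component isomorphisms. -/
def sumOrderIso {α β γ δ : Type} [PartialOrder α] [PartialOrder β] [PartialOrder γ]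
    [PartialOrder δ] (e : α ≃o γ) (f : β ≃o δ) : (α ⊕ β) ≃o (γ ⊕ δ) where
  toEquiv := Equiv.sumCongr e.toEquiv f.toEquiv
  map_rel_iff' := by
    rintro (x | x) (y | y) <;> simp [Sum.le_def, e.le_iff_le, f.le_iff_le]

def Pomset.par {A : Type} : Pomset A → Pomset A → Pomset A :=
  Quotient.map₂ LPoset.parL (by
    rintro u₁ u₂ ⟨e, he⟩ v₁ v₂ ⟨f, hf⟩
    refine ⟨sumOrderIso e f, ?_⟩
    rintro (x | x)
    · exact he x
    · exact hf x)

def LPoset.emptyL (A : Type) : LPoset A := { carrier := Fin 0, lab := fun x => x.elim0 }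

def LPoset.singleL {A : Type} (a : A) : LPoset A := { carrier := PUnit, lab := fun _ => a }

/-- The empty pomset `1`. -/
def Pomset.empty (A : Type) : Pomset A := ⟦LPoset.emptyL A⟧

/-- The single-letter pomset. -/
def Pomset.single {A : Type} (a : A) : Pomset A := ⟦LPoset.singleL a⟧

/-- Subsumption on labelled posets: `u ⊑ v` iff there is a label-preserving
order-preserving bijection from the carrier of `v` to that of `u`. -/
def LPoset.subL {A : Type} (u v : LPoset A) : Prop :=
  ∃ h : v.carrier ≃ u.carrier,
    (∀ x, u.lab (h x) = v.lab x) ∧ ∀ x y : v.carrier, x ≤ y → h x ≤ h y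

/-- Subsumption of pomsets: `Pomset.sub U V` means `U ⊑ V`. -/
def Pomset.sub {A : Type} : Pomset A → Pomset A → Prop :=
  Quotient.lift₂ LPoset.subL (by
    rintro u₁ v₁ u₂ v₂ ⟨e, he⟩ ⟨f, hf⟩
    refine propext ⟨?_, ?_⟩
    · rintro ⟨h, hl, hm⟩
      refine ⟨(f.toEquiv.symm.trans h).trans e.toEquiv, fun x => ?_, fun x y hxy => ?_⟩
      · show u₂.lab (e (h (f.symm x))) = v₂.lab x
        rw [he, hl, ← hf (f.symm x), OrderIso.apply_symm_apply]
      · simp only [Equiv.trans_apply]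
        exact e.le_iff_le.mpr (hm _ _ (f.symm.le_iff_le.mpr hxy))
    · rintro ⟨h, hl, hm⟩
      refine ⟨(f.toEquiv.trans h).trans e.toEquiv.symm, fun x => ?_, fun x y hxy => ?_⟩
      · show u₁.lab (e.symm (h (f x))) = v₁.lab x
        rw [← he (e.symm (h (f x))), OrderIso.apply_symm_apply, hl, hf]
      · simp only [Equiv.trans_apply]
        exact e.symm.le_iff_le.mpr (hm _ _ (f.le_iff_le.mpr hxy)))

def LPoset.isWordL {A : Type} (u : LPoset A) : Prop := ∀ x y : u.carrier, x ≤ y ∨ y ≤ x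

/-- A pomset is a word when it is totally ordered. -/
def Pomset.IsWord {A : Type} : Pomset A → Prop :=
  Quotient.lift LPoset.isWordL (by
    rintro u v ⟨e, -⟩
    refine propext ⟨fun h x y => ?_, fun h x y => ?_⟩
    · rcases h (e.symm x) (e.symm y) with h' | h'
      · exact Or.inl (e.symm.le_iff_le.mp h')
      · exact Or.inr (e.symm.le_iff_le.mp h')
    · rcases h (e x) (e y) with h' | h'
      · exact Or.inl (e.le_iff_le.mp h')
      · exact Or.inr (e.le_iff_le.mp h'))

def LPoset.mapL {A B : Type} (f : A → B) (u : LPoset A) : LPoset B :=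
  { carrier := u.carrier, lab := f ∘ u.lab }

/-- Relabelling of pomsets along a function on letters. -/
def Pomset.map {A B : Type} (f : A → B) : Pomset A → Pomset B :=
  Quotient.map (LPoset.mapL f)
    (by rintro u v ⟨e, he⟩; exact ⟨e, fun x => by exact congrArg f (he x)⟩)

def LPoset.overL {A : Type} (Γ : Set A) (u : LPoset A) : Prop := ∀ x, u.lab x ∈ Γ

/-- All labels of the pomset belong to `Γ`. -/
def Pomset.Over {A : Type} (Γ : Set A) : Pomset A → Prop :=
  Quotient.lift (LPoset.overL Γ) (by
    rintro u v ⟨e, he⟩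
    refine propext ⟨fun h x => ?_, fun h x => ?_⟩
    · have h2 := he (e.symm x)
      rw [OrderIso.apply_symm_apply] at h2
      rw [h2]; exact h _
    · rw [← he x]; exact h _)

/-- Series-parallel pomsets. -/
inductive Pomset.IsSP {A : Type} : Pomset A → Prop
  | empty : Pomset.IsSP (Pomset.empty A)
  | single (a : A) : Pomset.IsSP (Pomset.single a)
  | seq {U V : Pomset A} : Pomset.IsSP U → Pomset.IsSP V → Pomset.IsSP (Pomset.seq U V)
  | par {U V : Pomset A} : Pomset.IsSP U → Pomset.IsSP V → Pomset.IsSP (Pomset.par U V)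

def SPset (A : Type) : Set (Pomset A) := {U | U.IsSP}

/-! ### Pomset contexts -/

/-- Contexts are pomsets over `Option A`, where `none` plays the role of `*`.
`uniqueStarL` says there is exactly one `*`-labelled node. -/
def LPoset.uniqueStarL {A : Type} (c : LPoset (Option A)) : Prop := ∃! x, c.lab x = none

theorem LPoset.uniqueStarL_congr {A : Type} {u v : LPoset (Option A)}
    (e : u.carrier ≃o v.carrier) (he : ∀ x, v.lab (e x) = u.lab x) :
    u.uniqueStarL ↔ v.uniqueStarL := by
  constructor
  · rintro ⟨x, hx, hux⟩
    refine ⟨e x, show v.lab (e x) = none by rw [he]; exact hx, fun y hy => ?_⟩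
    have h2 := he (e.symm y)
    rw [OrderIso.apply_symm_apply] at h2
    have h3 : e.symm y = x := hux _ (h2.symm.trans hy)
    rw [← h3, OrderIso.apply_symm_apply]
  · rintro ⟨x, hx, hvx⟩
    refine ⟨e.symm x, ?_, fun y hy => ?_⟩
    · show u.lab (e.symm x) = none
      have h2 := he (e.symm x)
      rw [OrderIso.apply_symm_apply] at h2
      rw [← h2]; exact hx
    · have h3 : e y = x := hvx _ (show v.lab (e y) = none by rw [he]; exact hy)
      rw [← h3, OrderIso.symm_apply_apply]

/-- A pomset context: exactly one node labelled `*`. -/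
def Pomset.IsCtx {A : Type} : Pomset (Option A) → Prop :=
  Quotient.lift LPoset.uniqueStarL
    (fun _ _ h => propext (LPoset.uniqueStarL_congr h.choose h.choose_spec))

/-- Series-parallel pomset contexts. -/
def Pomset.IsSPCtx {A : Type} (C : Pomset (Option A)) : Prop := C.IsCtx ∧ C.IsSP

/-- Sequential (totally ordered) pomset contexts. -/
def Pomset.IsSeqCtx {A : Type} (C : Pomset (Option A)) : Prop := C.IsCtx ∧ C.IsWord

/-- The trivial context `*`. -/
def starCtx (A : Type) : Pomset (Option A) := Pomset.single (none : Option A)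

theorem option_get_eq_get {α : Type} {o₁ o₂ : Option α} (h : o₁ = o₂) (h₁ : o₁.isSome)
    (h₂ : o₂.isSome) : o₁.get h₁ = o₂.get h₂ := by subst h; rfl

/-- The order of `C[U]`: the orders of `C` (restricted away from `*`) and of `U`, with a
point of `C` below (resp. above) all of `U` when it is below (resp. above) the unique
`*`-node of `C`.  (For well-definedness of the order, the cross-relations are guarded by
the requirement that the star node is unique, which holds for every genuine context.) -/
def LPoset.insLe {A : Type} (c : LPoset (Option A)) (u : LPoset A) :
    ({x : c.carrier // c.lab x ≠ none} ⊕ u.carrier) →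
    ({x : c.carrier // c.lab x ≠ none} ⊕ u.carrier) → Prop
  | Sum.inl x, Sum.inl y => x.val ≤ y.val
  | Sum.inr x, Sum.inr y => x ≤ y
  | Sum.inl x, Sum.inr _ => c.uniqueStarL ∧ ∃ s, c.lab s = none ∧ x.val ≤ s
  | Sum.inr _, Sum.inl y => c.uniqueStarL ∧ ∃ s, c.lab s = none ∧ s ≤ y.val

/-- Insertion of a labelled poset `u` into the gap of a context `c`: the `*`-labelled
node is removed and `u` is put in its place, inheriting the order relations of `*`. -/
noncomputable def LPoset.insL {A : Type} (c : LPoset (Option A)) (u : LPoset A) :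
    LPoset A where
  carrier := {x : c.carrier // c.lab x ≠ none} ⊕ u.carrier
  fin := by classical exact inferInstance
  ord :=
    { le := LPoset.insLe c u
      lt := fun p q => LPoset.insLe c u p q ∧ ¬ LPoset.insLe c u q p
      lt_iff_le_not_ge := fun _ _ => Iff.rfl
      le_refl := by rintro (x | x) <;> exact le_refl _
      le_trans := by
        rintro (x | x) (y | y) (z | z) h1 h2
        · exact le_trans h1 h2
        · obtain ⟨hu, s, hs, hys⟩ := h2
          exact ⟨hu, s, hs, le_trans h1 hys⟩
        · obtain ⟨hu, s, hs, hxs⟩ := h1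
          obtain ⟨-, t, ht, htz⟩ := h2
          obtain ⟨w, hw, huniq⟩ := hu
          have hst : s = t := (huniq s hs).trans (huniq t ht).symm
          exact le_trans (hst ▸ hxs) htz
        · exact h1
        · obtain ⟨hu, s, hs, hsy⟩ := h1
          exact ⟨hu, s, hs, le_trans hsy h2⟩
        · obtain ⟨hu, s, hs, hsy⟩ := h1
          obtain ⟨-, t, ht, hyt⟩ := h2
          obtain ⟨w, hw, huniq⟩ := hu
          have hst : s = t := (huniq s hs).trans (huniq t ht).symm
          have hy : y.val = s := le_antisymm (hst.symm ▸ hyt) hsy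
          exact absurd (hy.symm ▸ hs) y.prop
        · exact h2
        · exact le_trans h1 h2
      le_antisymm := by
        rintro (x | x) (y | y) h1 h2
        · exact congrArg Sum.inl (Subtype.ext (le_antisymm h1 h2))
        · obtain ⟨hu, s, hs, hxs⟩ := h1
          obtain ⟨-, t, ht, htx⟩ := h2
          obtain ⟨w, hw, huniq⟩ := hu
          have hst : s = t := (huniq s hs).trans (huniq t ht).symm
          have hx : x.val = s := le_antisymm hxs (hst.symm ▸ htx)
          exact absurd (hx.symm ▸ hs) x.prop
        · obtain ⟨hu, s, hs, hsy⟩ := h1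
          obtain ⟨-, t, ht, hyt⟩ := h2
          obtain ⟨w, hw, huniq⟩ := hu
          have hst : s = t := (huniq s hs).trans (huniq t ht).symm
          have hy : y.val = s := le_antisymm (hst.symm ▸ hyt) hsy
          exact absurd (hy.symm ▸ hs) y.prop
        · exact congrArg Sum.inr (le_antisymm h1 h2) }
  lab := Sum.elim (fun x => (c.lab x.val).get (Option.isSome_iff_ne_none.mpr x.prop)) u.lab

/-- `Pomset.ins C U` is `C[U]`: plugging the pomset `U` into the gap of the context `C`. -/
noncomputable def Pomset.ins {A : Type} : Pomset (Option A) → Pomset A → Pomset A :=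
  Quotient.map₂ LPoset.insL (by
    rintro c₁ c₂ ⟨e, he⟩ u₁ u₂ ⟨f, hf⟩
    have hstar : c₁.uniqueStarL ↔ c₂.uniqueStarL := LPoset.uniqueStarL_congr e he
    refine ⟨{ toEquiv := Equiv.sumCongr
                (e.toEquiv.subtypeEquiv fun x => by
                  rw [show c₂.lab (e.toEquiv x) = c₁.lab x from he x]) f.toEquiv
              map_rel_iff' := ?_ }, ?_⟩
    · rintro (x | x) (y | y)
      · exact e.le_iff_le
      · show (c₂.uniqueStarL ∧ ∃ s, c₂.lab s = none ∧ (e x.val : c₂.carrier) ≤ s) ↔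
             (c₁.uniqueStarL ∧ ∃ s, c₁.lab s = none ∧ x.val ≤ s)
        constructor
        · rintro ⟨hu, s, hs, hxs⟩
          refine ⟨hstar.mpr hu, e.symm s, ?_, ?_⟩
          · have h2 := he (e.symm s)
            rw [OrderIso.apply_symm_apply] at h2
            rw [← h2]; exact hs
          · exact e.le_iff_le.mp (by rw [OrderIso.apply_symm_apply]; exact hxs)
        · rintro ⟨hu, s, hs, hxs⟩
          exact ⟨hstar.mp hu, e s, by rw [he]; exact hs, e.le_iff_le.mpr hxs⟩
      · show (c₂.uniqueStarL ∧ ∃ s, c₂.lab s = none ∧ s ≤ (e y.val : c₂.carrier)) ↔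
             (c₁.uniqueStarL ∧ ∃ s, c₁.lab s = none ∧ s ≤ y.val)
        constructor
        · rintro ⟨hu, s, hs, hsy⟩
          refine ⟨hstar.mpr hu, e.symm s, ?_, ?_⟩
          · have h2 := he (e.symm s)
            rw [OrderIso.apply_symm_apply] at h2
            rw [← h2]; exact hs
          · exact e.le_iff_le.mp (by rw [OrderIso.apply_symm_apply]; exact hsy)
        · rintro ⟨hu, s, hs, hsy⟩
          exact ⟨hstar.mp hu, e s, by rw [he]; exact hs, e.le_iff_le.mpr hsy⟩
      · exact f.le_iff_le
    · rintro (x | x)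
      · exact option_get_eq_get (he x.val) _ _
      · exact hf x)

/-! ### Pomset languages -/

abbrev Lang (A : Type) := Set (Pomset A)

def Lang.seq {A : Type} (L K : Lang A) : Lang A :=
  {W | ∃ U ∈ L, ∃ V ∈ K, W = Pomset.seq U V}

def Lang.par {A : Type} (L K : Lang A) : Lang A :=
  {W | ∃ U ∈ L, ∃ V ∈ K, W = Pomset.par U V}

def Lang.pow {A : Type} (L : Lang A) : ℕ → Lang A
  | 0 => {Pomset.empty A}
  | n + 1 => Lang.seq (Lang.pow L n) L

def Lang.star {A : Type} (L : Lang A) : Lang A := ⋃ n, L.pow n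

/-- Application of a context to a language: `C[L] = {C[U] : U ∈ L}`. -/
def Ctx.img {A : Type} (C : Pomset (Option A)) (L : Lang A) : Lang A :=
  {W | ∃ U ∈ L, W = C.ins U}

/-! ### CKA terms and semantics -/

inductive Term (A : Type) : Type
  | zero : Term A
  | one : Term A
  | var : A → Term A
  | add : Term A → Term A → Term A
  | seq : Term A → Term A → Term A
  | par : Term A → Term A → Term A
  | star : Term A → Term A

/-- Pomset language semantics of CKA terms. -/
def Term.lang {A : Type} : Term A → Lang A
  | .zero => ∅
  | .one => {Pomset.empty A}
  | .var a => {Pomset.single a}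
  | .add e f => e.lang ∪ f.lang
  | .seq e f => Lang.seq e.lang f.lang
  | .par e f => Lang.par e.lang f.lang
  | .star e => Lang.star e.lang

/-- Sets of hypotheses: a hypothesis `e ≤ f` is the pair `(e, f)`. -/
abbrev HypSet (A : Type) := Set (Term A × Term A)

/-- The congruence `≡^H` on CKA terms generated by the CKA axioms and the hypotheses `H`
(the constructor `hyp` encodes `e ≦^H f`, i.e. `e + f ≡^H f`, for `e ≤ f ∈ H`). -/
inductive CongH {A : Type} (H : HypSet A) : Term A → Term A → Prop
  | refl (e) : CongH H e e
  | symm {e f} : CongH H e f → CongH H f e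
  | trans {e f g} : CongH H e f → CongH H f g → CongH H e g
  | addCong {e e' f f'} : CongH H e e' → CongH H f f' → CongH H (.add e f) (.add e' f')
  | seqCong {e e' f f'} : CongH H e e' → CongH H f f' → CongH H (.seq e f) (.seq e' f')
  | parCong {e e' f f'} : CongH H e e' → CongH H f f' → CongH H (.par e f) (.par e' f')
  | starCong {e e'} : CongH H e e' → CongH H (.star e) (.star e')
  | addZero (e) : CongH H (.add e .zero) e
  | addIdem (e) : CongH H (.add e e) e
  | addComm (e f) : CongH H (.add e f) (.add f e)
  | addAssoc (e f g) : CongH H (.add e (.add f g)) (.add (.add e f) g)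
  | seqAssoc (e f g) : CongH H (.seq e (.seq f g)) (.seq (.seq e f) g)
  | seqDistL (e f g) : CongH H (.seq e (.add f g)) (.add (.seq e f) (.seq e g))
  | seqDistR (e f g) : CongH H (.seq (.add e f) g) (.add (.seq e g) (.seq f g))
  | seqOneR (e) : CongH H (.seq e .one) e
  | seqOneL (e) : CongH H (.seq .one e) e
  | seqZeroR (e) : CongH H (.seq e .zero) .zero
  | seqZeroL (e) : CongH H (.seq .zero e) .zero
  | parComm (e f) : CongH H (.par e f) (.par f e)
  | parOne (e) : CongH H (.par e .one) e
  | parZero (e) : CongH H (.par e .zero) .zero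
  | parAssoc (e f g) : CongH H (.par e (.par f g)) (.par (.par e f) g)
  | parDist (e f g) : CongH H (.par e (.add f g)) (.add (.par e f) (.par e g))
  | starUnfoldL (e) : CongH H (.add .one (.seq e (.star e))) (.star e)
  | starUnfoldR (e) : CongH H (.add .one (.seq (.star e) e)) (.star e)
  | lfpL {e f g} : CongH H (.add (.add e (.seq f g)) g) g →
      CongH H (.add (.seq (.star f) e) g) g
  | lfpR {e f g} : CongH H (.add (.add e (.seq f g)) f) f →
      CongH H (.add (.seq e (.star g)) f) f
  | hyp {e f} : (e, f) ∈ H → CongH H (.add e f) f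

/-- `e ≦^H f`, the natural order `e + f ≡^H f`. -/
def LeH {A : Type} (H : HypSet A) (e f : Term A) : Prop := CongH H (.add e f) f

/-- The `H`-closure of a pomset language, as an inductive predicate: the smallest language
containing `L` such that for all `e ≤ f ∈ H` and series-parallel contexts `C`,
if `C[⟦f⟧] ⊆ cl` then `C[⟦e⟧] ⊆ cl`. -/
inductive closure {A : Type} (H : HypSet A) (L : Lang A) : Pomset A → Prop
  | base {U} : U ∈ L → closure H L U
  | step {e f : Term A} (hef : (e, f) ∈ H) {C : Pomset (Option A)} (hC : C.IsSPCtx)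
      (hf : ∀ V ∈ f.lang, closure H L (C.ins V)) {U} (hU : U ∈ e.lang) :
      closure H L (C.ins U)

/-- `cl H L` is the `H`-closure of `L`. -/
def cl {A : Type} (H : HypSet A) (L : Lang A) : Lang A := {U | closure H L U}

/-- The sequential closure: like `cl` but only sequential contexts are used. -/
inductive seqClosure {A : Type} (H : HypSet A) (L : Lang A) : Pomset A → Prop
  | base {U} : U ∈ L → seqClosure H L U
  | step {e f : Term A} (hef : (e, f) ∈ H) {C : Pomset (Option A)} (hC : C.IsSeqCtx)
      (hf : ∀ V ∈ f.lang, seqClosure H L (C.ins V)) {U} (hU : U ∈ e.lang) :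
      seqClosure H L (C.ins U)

def seqCl {A : Type} (H : HypSet A) (L : Lang A) : Lang A := {U | seqClosure H L U}

/-! ### Implication, completeness, reductions -/

/-- `H` implies `H'`: every hypothesis of `H'` is derivable from `H`. -/
def Implies {A : Type} (H H' : HypSet A) : Prop := ∀ p ∈ H', LeH H p.1 p.2

/-- `H` is complete: semantic equivalence implies axiomatic equivalence. -/
def Complete {A : Type} (H : HypSet A) : Prop :=
  ∀ e f : Term A, cl H e.lang = cl H f.lang → CongH H e f

/-- A reduction from `H` to `H'` (presupposing that `H` implies `H'`). -/
structure IsReduction {A : Type} (H H' : HypSet A) (r : Term A → Term A) : Prop where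
  implies : Implies H H'
  equiv : ∀ e, CongH H e (r e)
  reflect : ∀ e f : Term A, cl H e.lang = cl H f.lang → cl H' (r e).lang = cl H' (r f).lang

def Reduces {A : Type} (H H' : HypSet A) : Prop := ∃ r, IsReduction H H' r

/-- A strong reduction from `H` to `H'`. -/
structure IsStrongReduction {A : Type} (H H' : HypSet A) (r : Term A → Term A)
    extends IsReduction H H' r : Prop where
  strong : ∀ e : Term A, cl H e.lang = cl H' (r e).lang

def StronglyReduces {A : Type} (H H' : HypSet A) : Prop := ∃ r, IsStrongReduction H H' r

/-- `H` factorises into `H₀` and `H₁`. -/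
def Factorises {A : Type} (H H₀ H₁ : HypSet A) : Prop :=
  Implies H H₀ ∧ Implies H H₁ ∧ ∀ L : Lang A, L ⊆ SPset A → cl H L = cl H₁ (cl H₀ L)

/-! ### The exchange hypotheses and sp-subsumption -/

/-- The exchange hypotheses `(e∥f)·(g∥h) ≤ (e·g)∥(f·h)`. -/
def exch (A : Type) : HypSet A :=
  {p | ∃ e f g h : Term A,
    p = (Term.seq (.par e f) (.par g h), Term.par (.seq e g) (.seq f h))}

/-- `⊑^sp`: the smallest precongruence on series-parallel pomsets satisfying the
exchange inequality. -/
inductive spSub {A : Type} : Pomset A → Pomset A → Prop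
  | refl {U : Pomset A} : U.IsSP → spSub U U
  | trans {U V W} : spSub U V → spSub V W → spSub U W
  | seqCong {U V U' V'} : spSub U V → spSub U' V' → spSub (Pomset.seq U U') (Pomset.seq V V')
  | parCong {U V U' V'} : spSub U V → spSub U' V' → spSub (Pomset.par U U') (Pomset.par V V')
  | exch {U V W X : Pomset A} : U.IsSP → V.IsSP → W.IsSP → X.IsSP →
      spSub (Pomset.seq (Pomset.par U V) (Pomset.par W X))
            (Pomset.par (Pomset.seq U W) (Pomset.seq V X))

/-! ### KA terms, grounded hypotheses, sequential reductions -/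

/-- A term is a KA term when it contains no `∥`. -/
def Term.noPar {A : Type} : Term A → Prop
  | .zero => True
  | .one => True
  | .var _ => True
  | .add e f => e.noPar ∧ f.noPar
  | .seq e f => e.noPar ∧ f.noPar
  | .par _ _ => False
  | .star e => e.noPar

/-- A non-empty word. -/
def IsNonemptyWord {A : Type} (W : Pomset A) : Prop := W.IsWord ∧ W ≠ Pomset.empty A

/-- A set of hypotheses is grounded when in each hypothesis `e ≤ f`, `e` is a KA term and
`⟦f⟧ = {W}` for a non-empty word `W`. -/
def Grounded {A : Type} (H : HypSet A) : Prop :=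
  ∀ p ∈ H, p.1.noPar ∧ ∃ W : Pomset A, IsNonemptyWord W ∧ p.2.lang = {W}

/-- `≡_KA^H`: the congruence on terms generated by the axioms of `≡` not involving `∥`
together with the hypotheses of `H`. -/
inductive KACong {A : Type} (H : HypSet A) : Term A → Term A → Prop
  | refl (e) : KACong H e e
  | symm {e f} : KACong H e f → KACong H f e
  | trans {e f g} : KACong H e f → KACong H f g → KACong H e g
  | addCong {e e' f f'} : KACong H e e' → KACong H f f' → KACong H (.add e f) (.add e' f')
  | seqCong {e e' f f'} : KACong H e e' → KACong H f f' → KACong H (.seq e f) (.seq e' f')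
  | starCong {e e'} : KACong H e e' → KACong H (.star e) (.star e')
  | addZero (e) : KACong H (.add e .zero) e
  | addIdem (e) : KACong H (.add e e) e
  | addComm (e f) : KACong H (.add e f) (.add f e)
  | addAssoc (e f g) : KACong H (.add e (.add f g)) (.add (.add e f) g)
  | seqAssoc (e f g) : KACong H (.seq e (.seq f g)) (.seq (.seq e f) g)
  | seqDistL (e f g) : KACong H (.seq e (.add f g)) (.add (.seq e f) (.seq e g))
  | seqDistR (e f g) : KACong H (.seq (.add e f) g) (.add (.seq e g) (.seq f g))
  | seqOneR (e) : KACong H (.seq e .one) e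
  | seqOneL (e) : KACong H (.seq .one e) e
  | seqZeroR (e) : KACong H (.seq e .zero) .zero
  | seqZeroL (e) : KACong H (.seq .zero e) .zero
  | starUnfoldL (e) : KACong H (.add .one (.seq e (.star e))) (.star e)
  | starUnfoldR (e) : KACong H (.add .one (.seq (.star e) e)) (.star e)
  | lfpL {e f g} : KACong H (.add (.add e (.seq f g)) g) g →
      KACong H (.add (.seq (.star f) e) g) g
  | lfpR {e f g} : KACong H (.add (.add e (.seq f g)) f) f →
      KACong H (.add (.seq e (.star g)) f) f
  | hyp {e f} : (e, f) ∈ H → KACong H (.add e f) f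

/-- A sequential reduction from `H` to `H'`. -/
structure IsSeqReduction {A : Type} (H H' : HypSet A) (r : Term A → Term A) : Prop where
  implies : Implies H H'
  equiv : ∀ e : Term A, e.noPar → KACong H e (r e)
  closure_eq : ∀ e : Term A, e.noPar → seqCl H e.lang = seqCl H' (r e).lang

/-- Extension of a map on (KA) terms to all CKA terms, homomorphically on `∥`. -/
def parExt {A : Type} (r : Term A → Term A) : Term A → Term A
  | .par e f => .par (parExt r e) (parExt r f)
  | e => r e

/-! ### Inductive characterisation of sp contexts -/

/-- The generators of series-parallel contexts (Lemma: `PC^sp` is the smallest such set). -/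
inductive GenCtx {A : Type} : Pomset (Option A) → Prop
  | star : GenCtx (Pomset.single (none : Option A))
  | seqL {U : Pomset A} {C} : U.IsSP → GenCtx C → GenCtx (Pomset.seq (Pomset.map some U) C)
  | seqR {C} {V : Pomset A} : GenCtx C → V.IsSP → GenCtx (Pomset.seq C (Pomset.map some V))
  | par {U : Pomset A} {C} : U.IsSP → GenCtx C → GenCtx (Pomset.par (Pomset.map some U) C)

/-! ### Reification -/

/-- Homomorphic extension of a letter map to terms. -/
def rTerm {A : Type} (r : A → Term A) : Term A → Term A
  | .zero => .zero
  | .one => .one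
  | .var a => r a
  | .add e f => .add (rTerm r e) (rTerm r f)
  | .seq e f => .seq (rTerm r e) (rTerm r f)
  | .par e f => .par (rTerm r e) (rTerm r f)
  | .star e => .star (rTerm r e)

/-- All letters of a term lie in `Γ`. -/
def TermOver {A : Type} (Γ : Set A) : Term A → Prop
  | .zero => True
  | .one => True
  | .var a => a ∈ Γ
  | .add e f => TermOver Γ e ∧ TermOver Γ f
  | .seq e f => TermOver Γ e ∧ TermOver Γ f
  | .par e f => TermOver Γ e ∧ TermOver Γ f
  | .star e => TermOver Γ e

/-- Extension of a letter map `r` to (series-parallel) pomsets, as a relation: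
`rMap r U V` means `V ∈ r(U)`. -/
inductive rMap {A : Type} (r : A → Term A) : Pomset A → Pomset A → Prop
  | one : rMap r (Pomset.empty A) (Pomset.empty A)
  | var (a : A) {V} : V ∈ (r a).lang → rMap r (Pomset.single a) V
  | seq {U U' V V'} : rMap r U V → rMap r U' V' →
      rMap r (Pomset.seq U U') (Pomset.seq V V')
  | par {U U' V V'} : rMap r U V → rMap r U' V' →
      rMap r (Pomset.par U U') (Pomset.par V V')

/-- Image of a language under (the pomset extension of) `r`. -/
def rImg {A : Type} (r : A → Term A) (L : Lang A) : Lang A := {V | ∃ U ∈ L, rMap r U V}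

/-- Series-parallel pomsets over the subalphabet `Γ`. -/
def SPover {A : Type} (Γ : Set A) : Lang A := {U | U.IsSP ∧ U.Over Γ}

/-- `r : Σ → Term Γ` is a reification from `H` to `H'`. -/
structure IsReification {A : Type} (Γ : Set A) (H H' : HypSet A) (r : A → Term A) : Prop where
  toGamma : ∀ a : A, TermOver Γ (r a)
  equiv : ∀ a : A, CongH H (r a) (.var a)
  expansive : ∀ a ∈ Γ, LeH (∅ : HypSet A) (.var a) (r a)
  preserves : ∀ L : Lang A, L ⊆ SPover Γ → cl H' L ⊆ SPover Γ
  hyps : ∀ p ∈ H, LeH H' (rTerm r p.1) (rTerm r p.2)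

end CKAH

namespace CKAH

/-! ### Pomset isomorphisms -/

theorem mkIso {A : Type} {u v : LPoset A} (f : u.carrier → v.carrier)
    (hs : Function.Surjective f) (hle : ∀ x y, f x ≤ f y ↔ x ≤ y)
    (hlab : ∀ x, v.lab (f x) = u.lab x) : (⟦u⟧ : Pomset A) = ⟦v⟧ :=
  Quotient.sound ⟨RelIso.ofSurjective (OrderEmbedding.ofMapLEIff f hle) hs, hlab⟩

theorem seq_assoc {A : Type} (U V W : Pomset A) :
    Pomset.seq U (Pomset.seq V W) = Pomset.seq (Pomset.seq U V) W := by
  induction U using Quotient.ind; rename_i u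
  induction V using Quotient.ind; rename_i v
  induction W using Quotient.ind; rename_i w
  symm
  refine Quotient.sound ⟨(OrderIso.sumLexAssoc u.carrier v.carrier w.carrier), ?_⟩
  rintro ((x | x) | x) <;> rfl

theorem par_assoc {A : Type} (U V W : Pomset A) :
    Pomset.par U (Pomset.par V W) = Pomset.par (Pomset.par U V) W := by
  induction U using Quotient.ind; rename_i u
  induction V using Quotient.ind; rename_i v
  induction W using Quotient.ind; rename_i w
  symm
  refine Quotient.sound ⟨(OrderIso.sumAssoc u.carrier v.carrier w.carrier), ?_⟩
  rintro ((x | x) | x) <;> rfl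

theorem par_comm {A : Type} (U V : Pomset A) : Pomset.par U V = Pomset.par V U := by
  induction U using Quotient.ind; rename_i u
  induction V using Quotient.ind; rename_i v
  refine Quotient.sound ⟨(OrderIso.sumComm u.carrier v.carrier), ?_⟩
  rintro (x | x) <;> rfl

theorem seq_le_ll {A : Type} {u v : LPoset A} (a b : u.carrier) :
    @LE.le (LPoset.seqL u v).carrier _ (Sum.inl a) (Sum.inl b) ↔ a ≤ b :=
  Sum.Lex.inl_le_inl_iff
theorem seq_le_rr {A : Type} {u v : LPoset A} (a b : v.carrier) :
    @LE.le (LPoset.seqL u v).carrier _ (Sum.inr a) (Sum.inr b) ↔ a ≤ b :=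
  Sum.Lex.inr_le_inr_iff
theorem seq_le_lr {A : Type} {u v : LPoset A} (a : u.carrier) (b : v.carrier) :
    @LE.le (LPoset.seqL u v).carrier _ (Sum.inl a) (Sum.inr b) :=
  Sum.Lex.inl_le_inr _ _
theorem seq_le_rl {A : Type} {u v : LPoset A} (a : v.carrier) (b : u.carrier) :
    ¬ @LE.le (LPoset.seqL u v).carrier _ (Sum.inr a) (Sum.inl b) :=
  Sum.Lex.not_inr_le_inl
theorem par_le_ll {A : Type} {u v : LPoset A} (a b : u.carrier) :
    @LE.le (LPoset.parL u v).carrier _ (Sum.inl a) (Sum.inl b) ↔ a ≤ b :=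
  Sum.inl_le_inl_iff
theorem par_le_rr {A : Type} {u v : LPoset A} (a b : v.carrier) :
    @LE.le (LPoset.parL u v).carrier _ (Sum.inr a) (Sum.inr b) ↔ a ≤ b :=
  Sum.inr_le_inr_iff
theorem par_le_lr {A : Type} {u v : LPoset A} (a : u.carrier) (b : v.carrier) :
    ¬ @LE.le (LPoset.parL u v).carrier _ (Sum.inl a) (Sum.inr b) :=
  Sum.not_inl_le_inr
theorem par_le_rl {A : Type} {u v : LPoset A} (a : v.carrier) (b : u.carrier) :
    ¬ @LE.le (LPoset.parL u v).carrier _ (Sum.inr a) (Sum.inl b) :=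
  Sum.not_inr_le_inl

theorem seq_one {A : Type} (U : Pomset A) : Pomset.seq U (Pomset.empty A) = U := by
  induction U using Quotient.ind; rename_i u
  symm
  refine mkIso (v := LPoset.seqL u (LPoset.emptyL A)) (fun x => Sum.inl x) ?_ ?_ ?_
  · rintro (x | x)
    · exact ⟨x, rfl⟩
    · exact Fin.elim0 x
  · exact fun x y => seq_le_ll x y
  · exact fun x => rfl

theorem one_seq {A : Type} (U : Pomset A) : Pomset.seq (Pomset.empty A) U = U := by
  induction U using Quotient.ind; rename_i u
  symm
  refine mkIso (v := LPoset.seqL (LPoset.emptyL A) u) (fun x => Sum.inr x) ?_ ?_ ?_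
  · rintro (x | x)
    · exact Fin.elim0 x
    · exact ⟨x, rfl⟩
  · exact fun x y => seq_le_rr x y
  · exact fun x => rfl

theorem par_one {A : Type} (U : Pomset A) : Pomset.par U (Pomset.empty A) = U := by
  induction U using Quotient.ind; rename_i u
  symm
  refine mkIso (v := LPoset.parL u (LPoset.emptyL A)) (fun x => Sum.inl x) ?_ ?_ ?_
  · rintro (x | x)
    · exact ⟨x, rfl⟩
    · exact Fin.elim0 x
  · exact fun x y => par_le_ll x y
  · exact fun x => rfl

theorem map_seq {A B : Type} (f : A → B) (U V : Pomset A) :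
    Pomset.map f (Pomset.seq U V) = Pomset.seq (Pomset.map f U) (Pomset.map f V) := by
  induction U using Quotient.ind; rename_i u
  induction V using Quotient.ind; rename_i v
  refine Quotient.sound ⟨OrderIso.refl _, ?_⟩
  rintro (x | x) <;> rfl

theorem map_par {A B : Type} (f : A → B) (U V : Pomset A) :
    Pomset.map f (Pomset.par U V) = Pomset.par (Pomset.map f U) (Pomset.map f V) := by
  induction U using Quotient.ind; rename_i u
  induction V using Quotient.ind; rename_i v
  refine Quotient.sound ⟨OrderIso.refl _, ?_⟩
  rintro (x | x) <;> rfl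

theorem map_empty {A B : Type} (f : A → B) :
    Pomset.map f (Pomset.empty A) = Pomset.empty B :=
  Quotient.sound ⟨OrderIso.refl _, fun x => Fin.elim0 x⟩

theorem map_single {A B : Type} (f : A → B) (a : A) :
    Pomset.map f (Pomset.single a) = Pomset.single (f a) := rfl

theorem isSP_map {A B : Type} (f : A → B) {U : Pomset A} (h : U.IsSP) :
    (Pomset.map f U).IsSP := by
  induction h with
  | empty => rw [map_empty]; exact .empty
  | single a => rw [map_single]; exact .single _
  | seq _ _ h1 h2 => rw [map_seq]; exact h1.seq h2
  | par _ _ h1 h2 => rw [map_par]; exact h1.par h2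

/-! ### Stars in composed contexts -/

theorem existsUnique_sum {α β γ : Type} (f : α → Option γ) (g : β → Option γ) :
    (∃! x : α ⊕ β, Sum.elim f g x = none) ↔
      ((∃! x, f x = none) ∧ ∀ y, g y ≠ none) ∨ ((∀ x, f x ≠ none) ∧ ∃! y, g y = none) := by
  constructor
  · rintro ⟨x | x, hx, hu⟩
    · refine Or.inl ⟨⟨x, hx, fun y hy => Sum.inl_injective (hu (Sum.inl y) hy)⟩, fun y hy => ?_⟩
      have := hu (Sum.inr y) hy
      cases this
    · refine Or.inr ⟨fun y hy => ?_, ⟨x, hx, fun y hy => Sum.inr_injective (hu (Sum.inr y) hy)⟩⟩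
      have := hu (Sum.inl y) hy
      cases this
  · rintro (⟨⟨x, hx, hu⟩, h⟩ | ⟨h, ⟨x, hx, hu⟩⟩)
    · refine ⟨Sum.inl x, hx, ?_⟩
      rintro (y | y) hy
      · exact congrArg _ (hu y hy)
      · exact absurd hy (h y)
    · refine ⟨Sum.inr x, hx, ?_⟩
      rintro (y | y) hy
      · exact absurd hy (h y)
      · exact congrArg _ (hu y hy)

def NoStar {A : Type} (C : Pomset (Option A)) : Prop := C.Over {x | x ≠ none}

theorem isCtx_seq {A : Type} (C D : Pomset (Option A)) :
    (Pomset.seq C D).IsCtx ↔ (C.IsCtx ∧ NoStar D) ∨ (NoStar C ∧ D.IsCtx) := by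
  induction C using Quotient.ind; rename_i u
  induction D using Quotient.ind; rename_i v
  exact existsUnique_sum u.lab v.lab

theorem isCtx_par {A : Type} (C D : Pomset (Option A)) :
    (Pomset.par C D).IsCtx ↔ (C.IsCtx ∧ NoStar D) ∨ (NoStar C ∧ D.IsCtx) := by
  induction C using Quotient.ind; rename_i u
  induction D using Quotient.ind; rename_i v
  exact existsUnique_sum u.lab v.lab

theorem noStar_seq {A : Type} {C D : Pomset (Option A)} (h : NoStar (Pomset.seq C D)) :
    NoStar C ∧ NoStar D := by
  induction C using Quotient.ind; rename_i u
  induction D using Quotient.ind; rename_i v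
  exact ⟨fun x => h (Sum.inl x), fun x => h (Sum.inr x)⟩

theorem noStar_par {A : Type} {C D : Pomset (Option A)} (h : NoStar (Pomset.par C D)) :
    NoStar C ∧ NoStar D := by
  induction C using Quotient.ind; rename_i u
  induction D using Quotient.ind; rename_i v
  exact ⟨fun x => h (Sum.inl x), fun x => h (Sum.inr x)⟩

theorem noStar_map {A : Type} (U : Pomset A) : NoStar (Pomset.map some U) := by
  induction U using Quotient.ind; rename_i u
  exact fun x => Option.some_ne_none _

theorem isCtx_star {A : Type} : (Pomset.single (none : Option A)).IsCtx :=
  ⟨PUnit.unit, rfl, fun _ _ => rfl⟩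

theorem spCtx_star {A : Type} : (Pomset.single (none : Option A)).IsSPCtx :=
  ⟨isCtx_star, .single _⟩

theorem spCtx_seqL {A : Type} {U : Pomset A} {C : Pomset (Option A)} (hU : U.IsSP)
    (hC : C.IsSPCtx) : (Pomset.seq (Pomset.map some U) C).IsSPCtx :=
  ⟨(isCtx_seq _ _).2 (Or.inr ⟨noStar_map U, hC.1⟩), (isSP_map _ hU).seq hC.2⟩

theorem spCtx_seqR {A : Type} {U : Pomset A} {C : Pomset (Option A)} (hU : U.IsSP)
    (hC : C.IsSPCtx) : (Pomset.seq C (Pomset.map some U)).IsSPCtx :=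
  ⟨(isCtx_seq _ _).2 (Or.inl ⟨hC.1, noStar_map U⟩), hC.2.seq (isSP_map _ hU)⟩

theorem spCtx_par {A : Type} {U : Pomset A} {C : Pomset (Option A)} (hU : U.IsSP)
    (hC : C.IsSPCtx) : (Pomset.par (Pomset.map some U) C).IsSPCtx :=
  ⟨(isCtx_par _ _).2 (Or.inr ⟨noStar_map U, hC.1⟩), (isSP_map _ hU).par hC.2⟩

theorem genCtx_isSPCtx {A : Type} {C : Pomset (Option A)} (h : GenCtx C) : C.IsSPCtx := by
  induction h with
  | star => exact spCtx_star
  | seqL hU _ ih => exact spCtx_seqL hU ih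
  | seqR _ hU ih => exact spCtx_seqR hU ih
  | par hU _ ih => exact spCtx_par hU ih

theorem isSP_cases {A : Type} {C : Pomset (Option A)} (h : C.IsSP) :
    (NoStar C → ∃ U : Pomset A, U.IsSP ∧ C = Pomset.map some U) ∧ (C.IsCtx → GenCtx C) := by
  induction h with
  | empty =>
    refine ⟨fun _ => ⟨_, .empty, (map_empty _).symm⟩, ?_⟩
    rintro ⟨x, -⟩
    exact Fin.elim0 x
  | single a =>
    cases a with
    | none => exact ⟨fun h => absurd rfl (h PUnit.unit), fun _ => .star⟩
    | some a =>
      refine ⟨fun _ => ⟨_, .single a, rfl⟩, ?_⟩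
      rintro ⟨x, hx, -⟩
      cases hx
  | seq _ _ h1 h2 =>
    refine ⟨fun h => ?_, fun h => ?_⟩
    · obtain ⟨a, b⟩ := noStar_seq h
      obtain ⟨U, hU, rfl⟩ := h1.1 a
      obtain ⟨V, hV, rfl⟩ := h2.1 b
      exact ⟨_, hU.seq hV, (map_seq _ _ _).symm⟩
    · rcases (isCtx_seq _ _).1 h with ⟨a, b⟩ | ⟨a, b⟩
      · obtain ⟨V, hV, rfl⟩ := h2.1 b
        exact .seqR (h1.2 a) hV
      · obtain ⟨V, hV, rfl⟩ := h1.1 a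
        exact .seqL hV (h2.2 b)
  | par _ _ h1 h2 =>
    refine ⟨fun h => ?_, fun h => ?_⟩
    · obtain ⟨a, b⟩ := noStar_par h
      obtain ⟨U, hU, rfl⟩ := h1.1 a
      obtain ⟨V, hV, rfl⟩ := h2.1 b
      exact ⟨_, hU.par hV, (map_par _ _ _).symm⟩
    · rcases (isCtx_par _ _).1 h with ⟨a, b⟩ | ⟨a, b⟩
      · obtain ⟨V, hV, rfl⟩ := h2.1 b
        rw [par_comm]
        exact .par hV (h1.2 a)
      · obtain ⟨V, hV, rfl⟩ := h1.1 a
        exact .par hV (h2.2 b)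

theorem isSPCtx_gen {A : Type} {C : Pomset (Option A)} (h : C.IsSPCtx) : GenCtx C :=
  (isSP_cases h.2).2 h.1

/-! ### Insertion into composed contexts -/

theorem ins_star {A : Type} (V : Pomset A) : (Pomset.single (none : Option A)).ins V = V := by
  induction V using Quotient.ind; rename_i v
  symm
  refine mkIso (v := LPoset.insL (LPoset.singleL none) v) (fun x => Sum.inr x) ?_ ?_ ?_
  · rintro (x | x)
    · exact absurd rfl x.2
    · exact ⟨x, rfl⟩
  · exact fun x y => Iff.rfl
  · exact fun x => rfl

theorem ins_seqL {A : Type} (U : Pomset A) {C : Pomset (Option A)} (hC : C.IsCtx)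
    (V : Pomset A) :
    (Pomset.seq (Pomset.map some U) C).ins V = Pomset.seq U (C.ins V) := by
  have hCC := (isCtx_seq (Pomset.map some U) C).2 (Or.inr ⟨noStar_map U, hC⟩)
  induction U using Quotient.ind; rename_i u
  induction C using Quotient.ind; rename_i c
  induction V using Quotient.ind; rename_i v
  symm
  have hC' : c.uniqueStarL := hC
  have hCC' : (LPoset.seqL (LPoset.mapL some u) c).uniqueStarL := hCC
  refine mkIso (u := LPoset.seqL u (LPoset.insL c v))
    (v := LPoset.insL (LPoset.seqL (LPoset.mapL some u) c) v)
    (fun x : u.carrier ⊕ ({x : c.carrier // c.lab x ≠ none} ⊕ v.carrier) => match x with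
      | Sum.inl a => Sum.inl ⟨Sum.inl a, Option.some_ne_none _⟩
      | Sum.inr (Sum.inl b) => Sum.inl ⟨Sum.inr b.1, b.2⟩
      | Sum.inr (Sum.inr b) => Sum.inr b) ?_ ?_ ?_
  · rintro (⟨x | x, hx⟩ | x)
    · exact ⟨Sum.inl x, rfl⟩
    · exact ⟨Sum.inr (Sum.inl ⟨x, hx⟩), rfl⟩
    · exact ⟨Sum.inr (Sum.inr x), rfl⟩
  · rintro (x | x | x) (y | y | y)
    · exact Iff.trans (seq_le_ll (u := LPoset.mapL some u) (v := c) x y) (seq_le_ll x y).symm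
    · exact iff_of_true (seq_le_lr (u := LPoset.mapL some u) (v := c) x y.1) (seq_le_lr _ _)
    · obtain ⟨s, hs, -⟩ := id hC'
      exact iff_of_true
        ⟨hCC', Sum.inr s, hs, seq_le_lr (u := LPoset.mapL some u) (v := c) x s⟩ (seq_le_lr _ _)
    · exact iff_of_false (seq_le_rl (u := LPoset.mapL some u) (v := c) x.1 y) (seq_le_rl _ _)
    · exact Iff.trans (seq_le_rr (u := LPoset.mapL some u) (v := c) x.1 y.1)
        (seq_le_rr (v := LPoset.insL c v) (Sum.inl x) (Sum.inl y)).symm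
    · refine Iff.trans ?_ (seq_le_rr (v := LPoset.insL c v) _ _).symm
      constructor
      · rintro ⟨-, s | s, hs, h⟩
        · cases hs
        · exact ⟨hC', s, hs, (seq_le_rr (u := LPoset.mapL some u) (v := c) _ _).1 h⟩
      · rintro ⟨-, s, hs, h⟩
        exact ⟨hCC', Sum.inr s, hs, (seq_le_rr (u := LPoset.mapL some u) (v := c) _ _).2 h⟩
    · refine iff_of_false ?_ (seq_le_rl _ _)
      rintro ⟨-, s | s, hs, h⟩
      · cases hs
      · exact seq_le_rl (u := LPoset.mapL some u) (v := c) _ _ h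
    · refine Iff.trans ?_ (seq_le_rr (v := LPoset.insL c v) _ _).symm
      constructor
      · rintro ⟨-, s | s, hs, h⟩
        · cases hs
        · exact ⟨hC', s, hs, (seq_le_rr (u := LPoset.mapL some u) (v := c) _ _).1 h⟩
      · rintro ⟨-, s, hs, h⟩
        exact ⟨hCC', Sum.inr s, hs, (seq_le_rr (u := LPoset.mapL some u) (v := c) _ _).2 h⟩
    · exact (seq_le_rr (v := LPoset.insL c v) (Sum.inr x) (Sum.inr y)).symm
  · rintro (x | x | x) <;> rfl

theorem ins_seqR {A : Type} (U : Pomset A) {C : Pomset (Option A)} (hC : C.IsCtx)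
    (V : Pomset A) :
    (Pomset.seq C (Pomset.map some U)).ins V = Pomset.seq (C.ins V) U := by
  have hCC := (isCtx_seq C (Pomset.map some U)).2 (Or.inl ⟨hC, noStar_map U⟩)
  induction U using Quotient.ind; rename_i u
  induction C using Quotient.ind; rename_i c
  induction V using Quotient.ind; rename_i v
  symm
  have hC' : c.uniqueStarL := hC
  have hCC' : (LPoset.seqL c (LPoset.mapL some u)).uniqueStarL := hCC
  refine mkIso (u := LPoset.seqL (LPoset.insL c v) u)
    (v := LPoset.insL (LPoset.seqL c (LPoset.mapL some u)) v)
    (fun x : ({x : c.carrier // c.lab x ≠ none} ⊕ v.carrier) ⊕ u.carrier => match x with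
      | Sum.inr a => Sum.inl ⟨Sum.inr a, Option.some_ne_none _⟩
      | Sum.inl (Sum.inl b) => Sum.inl ⟨Sum.inl b.1, b.2⟩
      | Sum.inl (Sum.inr b) => Sum.inr b) ?_ ?_ ?_
  · rintro (⟨x | x, hx⟩ | x)
    · exact ⟨Sum.inl (Sum.inl ⟨x, hx⟩), rfl⟩
    · exact ⟨Sum.inr x, rfl⟩
    · exact ⟨Sum.inl (Sum.inr x), rfl⟩
  · rintro ((x | x) | x) ((y | y) | y)
    · exact Iff.trans (seq_le_ll (v := LPoset.mapL some u) (u := c) x.1 y.1)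
        (seq_le_ll (u := LPoset.insL c v) (Sum.inl x) (Sum.inl y)).symm
    · refine Iff.trans ?_ (seq_le_ll (u := LPoset.insL c v) _ _).symm
      constructor
      · rintro ⟨-, s | s, hs, h⟩
        · exact ⟨hC', s, hs, (seq_le_ll (v := LPoset.mapL some u) (u := c) _ _).1 h⟩
        · cases hs
      · rintro ⟨-, s, hs, h⟩
        exact ⟨hCC', Sum.inl s, hs, (seq_le_ll (v := LPoset.mapL some u) (u := c) _ _).2 h⟩
    · exact iff_of_true (seq_le_lr (v := LPoset.mapL some u) (u := c) x.1 y) (seq_le_lr _ _)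
    · refine Iff.trans ?_ (seq_le_ll (u := LPoset.insL c v) _ _).symm
      constructor
      · rintro ⟨-, s | s, hs, h⟩
        · exact ⟨hC', s, hs, (seq_le_ll (v := LPoset.mapL some u) (u := c) _ _).1 h⟩
        · cases hs
      · rintro ⟨-, s, hs, h⟩
        exact ⟨hCC', Sum.inl s, hs, (seq_le_ll (v := LPoset.mapL some u) (u := c) _ _).2 h⟩
    · exact (seq_le_ll (u := LPoset.insL c v) (Sum.inr x) (Sum.inr y)).symm
    · obtain ⟨s, hs, -⟩ := id hC'
      exact iff_of_true
        ⟨hCC', Sum.inl s, hs, seq_le_lr (v := LPoset.mapL some u) (u := c) s y⟩ (seq_le_lr _ _)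
    · exact iff_of_false (seq_le_rl (v := LPoset.mapL some u) (u := c) x y.1) (seq_le_rl _ _)
    · refine iff_of_false ?_ (seq_le_rl _ _)
      rintro ⟨-, s | s, hs, h⟩
      · exact seq_le_rl (v := LPoset.mapL some u) (u := c) _ _ h
      · cases hs
    · exact Iff.trans (seq_le_rr (v := LPoset.mapL some u) (u := c) x y) (seq_le_rr x y).symm
  · rintro ((x | x) | x) <;> rfl

theorem ins_par {A : Type} (U : Pomset A) {C : Pomset (Option A)} (hC : C.IsCtx)
    (V : Pomset A) :
    (Pomset.par (Pomset.map some U) C).ins V = Pomset.par U (C.ins V) := by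
  have hCC := (isCtx_par (Pomset.map some U) C).2 (Or.inr ⟨noStar_map U, hC⟩)
  induction U using Quotient.ind; rename_i u
  induction C using Quotient.ind; rename_i c
  induction V using Quotient.ind; rename_i v
  symm
  have hC' : c.uniqueStarL := hC
  have hCC' : (LPoset.parL (LPoset.mapL some u) c).uniqueStarL := hCC
  refine mkIso (u := LPoset.parL u (LPoset.insL c v))
    (v := LPoset.insL (LPoset.parL (LPoset.mapL some u) c) v)
    (fun x : u.carrier ⊕ ({x : c.carrier // c.lab x ≠ none} ⊕ v.carrier) => match x with
      | Sum.inl a => Sum.inl ⟨Sum.inl a, Option.some_ne_none _⟩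
      | Sum.inr (Sum.inl b) => Sum.inl ⟨Sum.inr b.1, b.2⟩
      | Sum.inr (Sum.inr b) => Sum.inr b) ?_ ?_ ?_
  · rintro (⟨x | x, hx⟩ | x)
    · exact ⟨Sum.inl x, rfl⟩
    · exact ⟨Sum.inr (Sum.inl ⟨x, hx⟩), rfl⟩
    · exact ⟨Sum.inr (Sum.inr x), rfl⟩
  · rintro (x | x | x) (y | y | y)
    · exact Iff.trans (par_le_ll (u := LPoset.mapL some u) (v := c) x y) (par_le_ll x y).symm
    · exact iff_of_false (par_le_lr (u := LPoset.mapL some u) (v := c) x y.1) (par_le_lr _ _)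
    · refine iff_of_false ?_ (par_le_lr _ _)
      rintro ⟨-, s | s, hs, h⟩
      · cases hs
      · exact par_le_lr (u := LPoset.mapL some u) (v := c) _ _ h
    · exact iff_of_false (par_le_rl (u := LPoset.mapL some u) (v := c) x.1 y) (par_le_rl _ _)
    · exact Iff.trans (par_le_rr (u := LPoset.mapL some u) (v := c) x.1 y.1)
        (par_le_rr (v := LPoset.insL c v) (Sum.inl x) (Sum.inl y)).symm
    · refine Iff.trans ?_ (par_le_rr (v := LPoset.insL c v) _ _).symm
      constructor
      · rintro ⟨-, s | s, hs, h⟩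
        · cases hs
        · exact ⟨hC', s, hs, (par_le_rr (u := LPoset.mapL some u) (v := c) _ _).1 h⟩
      · rintro ⟨-, s, hs, h⟩
        exact ⟨hCC', Sum.inr s, hs, (par_le_rr (u := LPoset.mapL some u) (v := c) _ _).2 h⟩
    · refine iff_of_false ?_ (par_le_rl _ _)
      rintro ⟨-, s | s, hs, h⟩
      · cases hs
      · exact par_le_rl (u := LPoset.mapL some u) (v := c) _ _ h
    · refine Iff.trans ?_ (par_le_rr (v := LPoset.insL c v) _ _).symm
      constructor
      · rintro ⟨-, s | s, hs, h⟩
        · cases hs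
        · exact ⟨hC', s, hs, (par_le_rr (u := LPoset.mapL some u) (v := c) _ _).1 h⟩
      · rintro ⟨-, s, hs, h⟩
        exact ⟨hCC', Sum.inr s, hs, (par_le_rr (u := LPoset.mapL some u) (v := c) _ _).2 h⟩
    · exact (par_le_rr (v := LPoset.insL c v) (Sum.inr x) (Sum.inr y)).symm
  · rintro (x | x | x) <;> rfl

theorem ins_isSP {A : Type} {C : Pomset (Option A)} (hC : C.IsSPCtx) {V : Pomset A}
    (hV : V.IsSP) : (C.ins V).IsSP := by
  have h := isSPCtx_gen hC
  clear hC
  induction h with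
  | star => rwa [ins_star]
  | seqL hU hC ih => rw [ins_seqL _ (genCtx_isSPCtx hC).1]; exact hU.seq ih
  | seqR hC hU ih => rw [ins_seqR _ (genCtx_isSPCtx hC).1]; exact ih.seq hU
  | par hU hC ih => rw [ins_par _ (genCtx_isSPCtx hC).1]; exact hU.par ih

/-! ### Languages of terms are series-parallel -/

theorem lang_isSP {A : Type} (e : Term A) : ∀ U ∈ e.lang, U.IsSP := by
  induction e with
  | zero => exact fun U h => absurd h (Set.notMem_empty U)
  | one => rintro U rfl; exact .empty
  | var a => rintro U rfl; exact .single a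
  | add e f h1 h2 => rintro U (h | h); exacts [h1 U h, h2 U h]
  | seq e f h1 h2 => rintro _ ⟨U, hU, V, hV, rfl⟩; exact (h1 U hU).seq (h2 V hV)
  | par e f h1 h2 => rintro _ ⟨U, hU, V, hV, rfl⟩; exact (h1 U hU).par (h2 V hV)
  | star e ih =>
    intro U hU
    obtain ⟨n, hn⟩ := Set.mem_iUnion.1 hU
    clear hU
    induction n generalizing U with
    | zero => obtain rfl := hn; exact .empty
    | succ n ihn =>
      obtain ⟨U, hU, V, hV, rfl⟩ := hn
      exact (ihn U hU).seq (ih V hV)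

/-! ### Closure -/

theorem subset_cl {A : Type} (H : HypSet A) (L : Lang A) : L ⊆ cl H L := fun _ h => .base h

theorem cl_le {A : Type} {H : HypSet A} {L K : Lang A} (h : L ⊆ cl H K) :
    cl H L ⊆ cl H K := by
  intro U hU
  induction hU with
  | base hU => exact h hU
  | step hef hC _ hU ih => exact CKAH.closure.step hef hC ih hU

theorem cl_mono {A : Type} {H : HypSet A} {L K : Lang A} (h : L ⊆ K) : cl H L ⊆ cl H K :=
  cl_le (h.trans (subset_cl H K))

theorem cl_eq {A : Type} {H : HypSet A} {L K : Lang A} (h : L ⊆ cl H K) (h' : K ⊆ cl H L) :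
    cl H L = cl H K := (cl_le h).antisymm (cl_le h')

theorem cl_isSP {A : Type} {H : HypSet A} {L : Lang A} (h : ∀ U ∈ L, U.IsSP) :
    ∀ U ∈ cl H L, U.IsSP := by
  intro U hU
  induction hU with
  | base hU => exact h _ hU
  | step hef hC _ hU ih => exact ins_isSP hC (lang_isSP _ _ hU)

theorem cl_seqL {A : Type} {H : HypSet A} {L M : Lang A} {U : Pomset A} (hU : U.IsSP)
    (h : ∀ V ∈ L, Pomset.seq U V ∈ cl H M) : ∀ V ∈ cl H L, Pomset.seq U V ∈ cl H M := by
  intro V hV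
  induction hV with
  | base hV => exact h _ hV
  | step hef hC _ hV ih =>
    rw [← ins_seqL _ hC.1]
    exact CKAH.closure.step hef (spCtx_seqL hU hC) (fun W hW => by
      rw [ins_seqL _ hC.1]; exact ih W hW) hV

theorem cl_seqR {A : Type} {H : HypSet A} {L M : Lang A} {U : Pomset A} (hU : U.IsSP)
    (h : ∀ V ∈ L, Pomset.seq V U ∈ cl H M) : ∀ V ∈ cl H L, Pomset.seq V U ∈ cl H M := by
  intro V hV
  induction hV with
  | base hV => exact h _ hV
  | step hef hC _ hV ih =>
    rw [← ins_seqR _ hC.1]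
    exact CKAH.closure.step hef (spCtx_seqR hU hC) (fun W hW => by
      rw [ins_seqR _ hC.1]; exact ih W hW) hV

theorem cl_par {A : Type} {H : HypSet A} {L M : Lang A} {U : Pomset A} (hU : U.IsSP)
    (h : ∀ V ∈ L, Pomset.par U V ∈ cl H M) : ∀ V ∈ cl H L, Pomset.par U V ∈ cl H M := by
  intro V hV
  induction hV with
  | base hV => exact h _ hV
  | step hef hC _ hV ih =>
    rw [← ins_par _ hC.1]
    exact CKAH.closure.step hef (spCtx_par hU hC) (fun W hW => by
      rw [ins_par _ hC.1]; exact ih W hW) hV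

theorem seq_cl {A : Type} {H : HypSet A} {L K L' K' : Lang A} (hL : ∀ U ∈ L, U.IsSP)
    (hK : ∀ U ∈ K', U.IsSP) (h1 : L ⊆ cl H L') (h2 : K ⊆ cl H K') :
    Lang.seq L K ⊆ cl H (Lang.seq L' K') := by
  rintro _ ⟨U, hU, V, hV, rfl⟩
  refine cl_seqL (hL U hU) (fun W hW => ?_) V (h2 hV)
  refine cl_seqR (hK W hW) (fun X hX => ?_) U (h1 hU)
  exact subset_cl _ _ ⟨X, hX, W, hW, rfl⟩

theorem par_cl {A : Type} {H : HypSet A} {L K L' K' : Lang A} (hL : ∀ U ∈ L, U.IsSP)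
    (hK : ∀ U ∈ K', U.IsSP) (h1 : L ⊆ cl H L') (h2 : K ⊆ cl H K') :
    Lang.par L K ⊆ cl H (Lang.par L' K') := by
  rintro _ ⟨U, hU, V, hV, rfl⟩
  refine cl_par (hL U hU) (fun W hW => ?_) V (h2 hV)
  rw [par_comm]
  refine cl_par (hK W hW) (fun X hX => ?_) U (h1 hU)
  exact subset_cl _ _ ⟨X, hX, W, hW, par_comm _ _⟩

/-- Closures are compatible with series-parallel contexts. -/
theorem cl_ctx {A : Type} {H : HypSet A} {C : Pomset (Option A)} (hC : C.IsSPCtx)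
    {L : Lang A} {U : Pomset A} (hU : U ∈ cl H L) : C.ins U ∈ cl H (Ctx.img C L) := by
  have h := isSPCtx_gen hC
  clear hC
  induction h with
  | star =>
    rw [ins_star]
    refine cl_mono (fun V hV => ?_) hU
    exact ⟨V, hV, (ins_star V).symm⟩
  | seqL hV hC ih =>
    have hc := (genCtx_isSPCtx hC).1
    rw [ins_seqL _ hc]
    refine cl_seqL hV ?_ _ ih
    rintro _ ⟨W, hW, rfl⟩
    exact subset_cl _ _ ⟨W, hW, (ins_seqL _ hc _).symm⟩
  | seqR hC hV ih =>
    have hc := (genCtx_isSPCtx hC).1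
    rw [ins_seqR _ hc]
    refine cl_seqR hV ?_ _ ih
    rintro _ ⟨W, hW, rfl⟩
    exact subset_cl _ _ ⟨W, hW, (ins_seqR _ hc _).symm⟩
  | par hV hC ih =>
    have hc := (genCtx_isSPCtx hC).1
    rw [ins_par _ hc]
    refine cl_par hV ?_ _ ih
    rintro _ ⟨W, hW, rfl⟩
    exact subset_cl _ _ ⟨W, hW, (ins_par _ hc _).symm⟩

/-! ### Language identities -/

theorem lang_seq_assoc {A : Type} (L K M : Lang A) :
    Lang.seq L (Lang.seq K M) = Lang.seq (Lang.seq L K) M := by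
  ext W
  constructor
  · rintro ⟨U, hU, _, ⟨V, hV, X, hX, rfl⟩, rfl⟩
    exact ⟨_, ⟨U, hU, V, hV, rfl⟩, X, hX, seq_assoc _ _ _⟩
  · rintro ⟨_, ⟨U, hU, V, hV, rfl⟩, X, hX, rfl⟩
    exact ⟨U, hU, _, ⟨V, hV, X, hX, rfl⟩, (seq_assoc _ _ _).symm⟩

theorem lang_par_assoc {A : Type} (L K M : Lang A) :
    Lang.par L (Lang.par K M) = Lang.par (Lang.par L K) M := by
  ext W
  constructor
  · rintro ⟨U, hU, _, ⟨V, hV, X, hX, rfl⟩, rfl⟩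
    exact ⟨_, ⟨U, hU, V, hV, rfl⟩, X, hX, par_assoc _ _ _⟩
  · rintro ⟨_, ⟨U, hU, V, hV, rfl⟩, X, hX, rfl⟩
    exact ⟨U, hU, _, ⟨V, hV, X, hX, rfl⟩, (par_assoc _ _ _).symm⟩

theorem lang_par_comm {A : Type} (L K : Lang A) : Lang.par L K = Lang.par K L := by
  ext W
  constructor <;>
  · rintro ⟨U, hU, V, hV, rfl⟩
    exact ⟨V, hV, U, hU, par_comm _ _⟩

theorem lang_seq_one {A : Type} (L : Lang A) : Lang.seq L {Pomset.empty A} = L := by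
  ext W
  constructor
  · rintro ⟨U, hU, _, rfl, rfl⟩
    rwa [seq_one]
  · exact fun h => ⟨W, h, _, rfl, (seq_one W).symm⟩

theorem lang_one_seq {A : Type} (L : Lang A) : Lang.seq {Pomset.empty A} L = L := by
  ext W
  constructor
  · rintro ⟨_, rfl, U, hU, rfl⟩
    rwa [one_seq]
  · exact fun h => ⟨_, rfl, W, h, (one_seq W).symm⟩

theorem lang_par_one {A : Type} (L : Lang A) : Lang.par L {Pomset.empty A} = L := by
  ext W
  constructor
  · rintro ⟨U, hU, _, rfl, rfl⟩
    rwa [par_one]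
  · exact fun h => ⟨W, h, _, rfl, (par_one W).symm⟩

theorem lang_seq_union {A : Type} (L K M : Lang A) :
    Lang.seq L (K ∪ M) = Lang.seq L K ∪ Lang.seq L M := by
  ext W
  constructor
  · rintro ⟨U, hU, V, hV | hV, rfl⟩
    exacts [Or.inl ⟨U, hU, V, hV, rfl⟩, Or.inr ⟨U, hU, V, hV, rfl⟩]
  · rintro (⟨U, hU, V, hV, rfl⟩ | ⟨U, hU, V, hV, rfl⟩)
    exacts [⟨U, hU, V, Or.inl hV, rfl⟩, ⟨U, hU, V, Or.inr hV, rfl⟩]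

theorem lang_union_seq {A : Type} (L K M : Lang A) :
    Lang.seq (L ∪ K) M = Lang.seq L M ∪ Lang.seq K M := by
  ext W
  constructor
  · rintro ⟨U, hU | hU, V, hV, rfl⟩
    exacts [Or.inl ⟨U, hU, V, hV, rfl⟩, Or.inr ⟨U, hU, V, hV, rfl⟩]
  · rintro (⟨U, hU, V, hV, rfl⟩ | ⟨U, hU, V, hV, rfl⟩)
    exacts [⟨U, Or.inl hU, V, hV, rfl⟩, ⟨U, Or.inr hU, V, hV, rfl⟩]

theorem lang_par_union {A : Type} (L K M : Lang A) :
    Lang.par L (K ∪ M) = Lang.par L K ∪ Lang.par L M := by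
  ext W
  constructor
  · rintro ⟨U, hU, V, hV | hV, rfl⟩
    exacts [Or.inl ⟨U, hU, V, hV, rfl⟩, Or.inr ⟨U, hU, V, hV, rfl⟩]
  · rintro (⟨U, hU, V, hV, rfl⟩ | ⟨U, hU, V, hV, rfl⟩)
    exacts [⟨U, hU, V, Or.inl hV, rfl⟩, ⟨U, hU, V, Or.inr hV, rfl⟩]

theorem lang_seq_empty {A : Type} (L : Lang A) : Lang.seq L ∅ = ∅ := by
  ext W
  constructor
  · rintro ⟨U, hU, V, hV, rfl⟩
    exact hV.elim
  · exact fun h => h.elim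

theorem lang_empty_seq {A : Type} (L : Lang A) : Lang.seq ∅ L = ∅ := by
  ext W
  constructor
  · rintro ⟨U, hU, V, hV, rfl⟩
    exact hU.elim
  · exact fun h => h.elim

theorem lang_par_empty {A : Type} (L : Lang A) : Lang.par L ∅ = ∅ := by
  ext W
  constructor
  · rintro ⟨U, hU, V, hV, rfl⟩
    exact hV.elim
  · exact fun h => h.elim

theorem pow_succ_left {A : Type} (L : Lang A) (n : ℕ) :
    L.pow (n + 1) = Lang.seq L (L.pow n) := by
  induction n with
  | zero =>
    show Lang.seq {Pomset.empty A} L = Lang.seq L {Pomset.empty A}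
    rw [lang_seq_one, lang_one_seq]
  | succ n ih =>
    show Lang.seq (L.pow (n + 1)) L = Lang.seq L (Lang.seq (L.pow n) L)
    rw [ih, lang_seq_assoc]

theorem star_unfoldR {A : Type} (L : Lang A) :
    {Pomset.empty A} ∪ Lang.seq L.star L = L.star := by
  ext W
  constructor
  · rintro (h | ⟨U, hU, V, hV, rfl⟩)
    · exact Set.mem_iUnion.2 ⟨0, h⟩
    · obtain ⟨n, hn⟩ := Set.mem_iUnion.1 hU
      exact Set.mem_iUnion.2 ⟨n + 1, U, hn, V, hV, rfl⟩
  · intro h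
    obtain ⟨n, hn⟩ := Set.mem_iUnion.1 h
    cases n with
    | zero => exact Or.inl hn
    | succ n =>
      obtain ⟨U, hU, V, hV, rfl⟩ := hn
      exact Or.inr ⟨U, Set.mem_iUnion.2 ⟨n, hU⟩, V, hV, rfl⟩

theorem star_unfoldL {A : Type} (L : Lang A) :
    {Pomset.empty A} ∪ Lang.seq L L.star = L.star := by
  ext W
  constructor
  · rintro (h | ⟨U, hU, V, hV, rfl⟩)
    · exact Set.mem_iUnion.2 ⟨0, h⟩
    · obtain ⟨n, hn⟩ := Set.mem_iUnion.1 hV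
      refine Set.mem_iUnion.2 ⟨n + 1, ?_⟩
      rw [pow_succ_left]
      exact ⟨U, hU, V, hn, rfl⟩
  · intro h
    obtain ⟨n, hn⟩ := Set.mem_iUnion.1 h
    cases n with
    | zero => exact Or.inl hn
    | succ n =>
      rw [pow_succ_left] at hn
      obtain ⟨U, hU, V, hV, rfl⟩ := hn
      exact Or.inr ⟨U, hU, V, Set.mem_iUnion.2 ⟨n, hV⟩, rfl⟩

theorem pow_isSP {A : Type} (e : Term A) (n : ℕ) : ∀ U ∈ e.lang.pow n, U.IsSP :=
  fun U hU => lang_isSP (.star e) U (Set.mem_iUnion.2 ⟨n, hU⟩)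

theorem star_cl {A : Type} {H : HypSet A} {e f : Term A} (h : e.lang ⊆ cl H f.lang) :
    e.lang.star ⊆ cl H f.lang.star := by
  intro U hU
  obtain ⟨n, hn⟩ := Set.mem_iUnion.1 hU
  have key : ∀ n, e.lang.pow n ⊆ cl H (f.lang.pow n) := by
    intro n
    induction n with
    | zero => exact subset_cl H _
    | succ n ih => exact seq_cl (pow_isSP e n) (lang_isSP f) ih h
  exact cl_mono (Set.subset_iUnion (fun n => f.lang.pow n) n) (key n hn)

theorem sub_of_add {A : Type} {H : HypSet A} {L K : Lang A} (h : cl H (L ∪ K) = cl H K) :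
    L ⊆ cl H K := by
  rw [← h]
  exact fun U hU => .base (Or.inl hU)

theorem add_of_sub {A : Type} {H : HypSet A} {L K : Lang A} (h : L ⊆ cl H K) :
    cl H (L ∪ K) = cl H K :=
  cl_eq (Set.union_subset h (subset_cl H K)) (fun _ hU => .base (Or.inr hU))

/-- Soundness of `≡^H` for the closure semantics. -/
theorem sound {A : Type} {H : HypSet A} {e f : Term A} (h : CongH H e f) :
    cl H e.lang = cl H f.lang := by
  have le : ∀ {L K : Lang A}, cl H L = cl H K → L ⊆ cl H K :=
    fun {L K} h => h ▸ subset_cl H L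
  induction h with
  | refl e => rfl
  | symm _ ih => exact ih.symm
  | trans _ _ h1 h2 => exact h1.trans h2
  | addCong _ _ h1 h2 =>
    exact cl_eq
      (Set.union_subset ((le h1).trans (cl_mono Set.subset_union_left))
        ((le h2).trans (cl_mono Set.subset_union_right)))
      (Set.union_subset ((le h1.symm).trans (cl_mono Set.subset_union_left))
        ((le h2.symm).trans (cl_mono Set.subset_union_right)))
  | seqCong _ _ h1 h2 =>
    exact cl_eq (seq_cl (lang_isSP _) (lang_isSP _) (le h1) (le h2))
      (seq_cl (lang_isSP _) (lang_isSP _) (le h1.symm) (le h2.symm))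
  | parCong _ _ h1 h2 =>
    exact cl_eq (par_cl (lang_isSP _) (lang_isSP _) (le h1) (le h2))
      (par_cl (lang_isSP _) (lang_isSP _) (le h1.symm) (le h2.symm))
  | starCong _ h => exact cl_eq (star_cl (le h)) (star_cl (le h.symm))
  | addZero e => exact congrArg (cl H) (Set.union_empty _)
  | addIdem e => exact congrArg (cl H) (Set.union_self _)
  | addComm e f => exact congrArg (cl H) (Set.union_comm _ _)
  | addAssoc e f g => exact congrArg (cl H) (Set.union_assoc _ _ _).symm
  | seqAssoc e f g => exact congrArg (cl H) (lang_seq_assoc _ _ _)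
  | seqDistL e f g => exact congrArg (cl H) (lang_seq_union _ _ _)
  | seqDistR e f g => exact congrArg (cl H) (lang_union_seq _ _ _)
  | seqOneR e => exact congrArg (cl H) (lang_seq_one _)
  | seqOneL e => exact congrArg (cl H) (lang_one_seq _)
  | seqZeroR e => exact congrArg (cl H) (lang_seq_empty _)
  | seqZeroL e => exact congrArg (cl H) (lang_empty_seq _)
  | parComm e f => exact congrArg (cl H) (lang_par_comm _ _)
  | parOne e => exact congrArg (cl H) (lang_par_one _)
  | parZero e => exact congrArg (cl H) (lang_par_empty _)
  | parAssoc e f g => exact congrArg (cl H) (lang_par_assoc _ _ _)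
  | parDist e f g => exact congrArg (cl H) (lang_par_union _ _ _)
  | starUnfoldL e => exact congrArg (cl H) (star_unfoldL _)
  | starUnfoldR e => exact congrArg (cl H) (star_unfoldR _)
  | @lfpL e f g _ ih =>
    have h0 : e.lang ∪ Lang.seq f.lang g.lang ⊆ cl H g.lang := sub_of_add ih
    have key : ∀ n, Lang.seq (f.lang.pow n) e.lang ⊆ cl H g.lang := by
      intro n
      induction n with
      | zero =>
        show Lang.seq {Pomset.empty A} e.lang ⊆ _
        rw [lang_one_seq]
        exact Set.subset_union_left.trans h0
      | succ n ihn =>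
        rw [pow_succ_left, ← lang_seq_assoc]
        exact (seq_cl (lang_isSP f) (lang_isSP g) (subset_cl H _) ihn).trans
          (cl_le (Set.subset_union_right.trans h0))
    refine add_of_sub ?_
    rintro _ ⟨U, hU, V, hV, rfl⟩
    obtain ⟨n, hn⟩ := Set.mem_iUnion.1 hU
    exact key n ⟨U, hn, V, hV, rfl⟩
  | @lfpR e f g _ ih =>
    have h0 : e.lang ∪ Lang.seq f.lang g.lang ⊆ cl H f.lang := sub_of_add ih
    have key : ∀ n, Lang.seq e.lang (g.lang.pow n) ⊆ cl H f.lang := by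
      intro n
      induction n with
      | zero =>
        show Lang.seq e.lang {Pomset.empty A} ⊆ _
        rw [lang_seq_one]
        exact Set.subset_union_left.trans h0
      | succ n ihn =>
        show Lang.seq e.lang (Lang.seq (g.lang.pow n) g.lang) ⊆ _
        rw [lang_seq_assoc]
        refine (seq_cl ?_ (lang_isSP g) ihn (subset_cl H _)).trans
          (cl_le (Set.subset_union_right.trans h0))
        rintro _ ⟨U, hU, V, hV, rfl⟩
        exact (lang_isSP e U hU).seq (pow_isSP g n V hV)
    refine add_of_sub ?_
    rintro _ ⟨U, hU, V, hV, rfl⟩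
    obtain ⟨n, hn⟩ := Set.mem_iUnion.1 hV
    exact key n ⟨U, hU, V, hn, rfl⟩
  | @hyp e f hef =>
    refine add_of_sub fun U hU => ?_
    rw [← ins_star U]
    exact CKAH.closure.step hef spCtx_star (fun V hV => by rw [ins_star]; exact .base hV) hU

/-- If `H` implies `H'` then the `H'`-closure is contained in the `H`-closure. -/
theorem cl_of_implies {A : Type} {H H' : HypSet A} (h : Implies H H') (L : Lang A) :
    cl H' L ⊆ cl H L := by
  intro U hU
  induction hU with
  | base hU => exact .base hU
  | @step e f hef C hC _ U hU ih =>
    have h1 : e.lang ⊆ cl H f.lang := sub_of_add (sound (h _ hef))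
    refine cl_le ?_ (cl_ctx hC (h1 hU))
    rintro _ ⟨V, hV, rfl⟩
    exact ih V hV

/-- If `H` implies `H'` then `≡^H'` is contained in `≡^H`. -/
theorem congH_of_implies {A : Type} {H H' : HypSet A} (h : Implies H H') {e f : Term A}
    (hef : CongH H' e f) : CongH H e f := by
  induction hef with
  | symm _ ih => exact ih.symm
  | trans _ _ h1 h2 => exact h1.trans h2
  | addCong _ _ h1 h2 => exact h1.addCong h2
  | seqCong _ _ h1 h2 => exact h1.seqCong h2
  | parCong _ _ h1 h2 => exact h1.parCong h2
  | starCong _ h1 => exact h1.starCong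
  | lfpL _ ih => exact ih.lfpL
  | lfpR _ ih => exact ih.lfpR
  | hyp hm => exact h _ hm
  | refl => exact .refl _
  | addZero => exact .addZero _
  | addIdem => exact .addIdem _
  | addComm => exact .addComm _ _
  | addAssoc => exact .addAssoc _ _ _
  | seqAssoc => exact .seqAssoc _ _ _
  | seqDistL => exact .seqDistL _ _ _
  | seqDistR => exact .seqDistR _ _ _
  | seqOneR => exact .seqOneR _
  | seqOneL => exact .seqOneL _
  | seqZeroR => exact .seqZeroR _
  | seqZeroL => exact .seqZeroL _
  | parComm => exact .parComm _ _
  | parOne => exact .parOne _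
  | parZero => exact .parZero _
  | parAssoc => exact .parAssoc _ _ _
  | parDist => exact .parDist _ _ _
  | starUnfoldL => exact .starUnfoldL _
  | starUnfoldR => exact .starUnfoldR _

/-- **Carry-over of completeness along a reduction.** -/
theorem carry_over (A : Type) (H H' : HypSet A) (r : Term A → Term A)
    (hr : IsReduction H H' r) :
    (Complete H' → Complete H) ∧
    (∀ e f : Term A, cl H e.lang = cl H f.lang ↔ cl H' (r e).lang = cl H' (r f).lang) := by
  refine ⟨fun hc e f hef => ?_, fun e f => ⟨hr.reflect e f, fun h => ?_⟩⟩
  · exact (hr.equiv e).trans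
      ((congH_of_implies hr.implies (hc _ _ (hr.reflect e f hef))).trans (hr.equiv f).symm)
  · rw [sound (hr.equiv e), sound (hr.equiv f)]
    refine cl_eq ?_ ?_
    · exact (subset_cl H' _).trans (h.subset.trans (cl_of_implies hr.implies _))
    · exact (subset_cl H' _).trans (h.symm.subset.trans (cl_of_implies hr.implies _))

end CKAH
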